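/- The invariant subalgebra $A_0$ is free as a module over the polynomial ring $k[T_0,\dots,T_n]$ (acting on $A$ via the $k$-algebra map $T_i \mapsto x_iy_i$) with basis $\{1\} \cup \{u^r : r \ge 1\} \cup \{v^s : s \ge 1\}$. -/

import Mathlib

open MvPolynomial

noncomputable section

/-- The variables of `A = k[x₀,…,xₙ,y₀,…,yₙ]`: `Sum.inl i` is `xᵢ`, `Sum.inr i` is `yᵢ`. -/
abbrev Vars (n : ℕ) : Type := Fin (n + 1) ⊕ Fin (n + 1)

/-- The `l`-th weight of a monomial `∏ xᵢ^{cᵢ} yᵢ^{dᵢ}`, for `l ∈ {1,…,n}` encoded as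
`l : Fin n` (representing the index `l+1`): it is `c_{l-1} - c_l - d_{l-1} + d_l`. -/
def wt (n : ℕ) (σ : Vars n →₀ ℕ) (l : Fin n) : ℤ :=
  (σ (Sum.inl l.castSucc) : ℤ) - (σ (Sum.inl l.succ) : ℤ)
    - (σ (Sum.inr l.castSucc) : ℤ) + (σ (Sum.inr l.succ) : ℤ)

/-- The weight space `A_χ`. -/
def wtSpace (k : Type) [Field k] (n : ℕ) (χ : Fin n → ℤ) : Set (MvPolynomial (Vars n) k) :=
  {p | ∀ σ ∈ p.support, ∀ l : Fin n, wt n σ l = χ l}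

/-- `A` is an algebra (hence a module) over `R' = k[T₀,…,Tₙ]` via `Tᵢ ↦ xᵢyᵢ`. -/
instance polyAlg (k : Type) [Field k] (n : ℕ) :
    Algebra (MvPolynomial (Fin (n + 1)) k) (MvPolynomial (Vars n) k) :=
  ((aeval fun i : Fin (n + 1) =>
      (X (Sum.inl i) * X (Sum.inr i) : MvPolynomial (Vars n) k)) :
    MvPolynomial (Fin (n + 1)) k →ₐ[k] MvPolynomial (Vars n) k).toRingHom.toAlgebra

/-- The family `{1} ∪ {uʳ : r ≥ 1} ∪ {vˢ : s ≥ 1}`, indexed by `ℤ`: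
`z ↦ u^z` for `z ≥ 0` (so `z = 0` gives `1`) and `z ↦ v^{-z}` for `z < 0`. -/
def basisElt (k : Type) [Field k] (n : ℕ) (z : ℤ) : MvPolynomial (Vars n) k :=
  if 0 ≤ z then (∏ i, X (Sum.inl i)) ^ z.toNat else (∏ i, X (Sum.inr i)) ^ (-z).toNat

/-- Exponent vector of the basis element indexed by `z`. -/
def eExp (n : ℕ) (z : ℤ) : Vars n →₀ ℕ :=
  Finsupp.equivFunOnFinite.symm (Sum.elim (fun _ => z.toNat) (fun _ => (-z).toNat))

/-- Exponent vector of the image of the monomial `T^τ`. -/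
def dExp (n : ℕ) (τ : Fin (n + 1) →₀ ℕ) : Vars n →₀ ℕ :=
  Finsupp.equivFunOnFinite.symm (Sum.elim (fun i => τ i) (fun i => τ i))

lemma prod_X_pow_eq (k : Type) [Field k] (n : ℕ) (σ : Vars n →₀ ℕ) :
    (monomial σ (1 : k)) =
      (∏ i, X (Sum.inl i) ^ σ (Sum.inl i)) * ∏ i, X (Sum.inr i) ^ σ (Sum.inr i) := by
  rw [monomial_eq, Finsupp.prod_fintype _ _ (by simp), Fintype.prod_sum_type]
  simp

lemma basisElt_eq (k : Type) [Field k] (n : ℕ) (z : ℤ) :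
    basisElt k n z = monomial (eExp n z) 1 := by
  rw [prod_X_pow_eq]
  unfold basisElt eExp
  split_ifs with h
  · have : (-z).toNat = 0 := by omega
    simp [this, Finset.prod_pow]
  · have : z.toNat = 0 := by omega
    simp [this, Finset.prod_pow]

lemma algebraMap_monomial (k : Type) [Field k] (n : ℕ) (τ : Fin (n + 1) →₀ ℕ) (c : k) :
    algebraMap (MvPolynomial (Fin (n + 1)) k) (MvPolynomial (Vars n) k) (monomial τ c) =
      monomial (dExp n τ) c := by
  have h : algebraMap (MvPolynomial (Fin (n + 1)) k) (MvPolynomial (Vars n) k) (monomial τ c) =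
    aeval (fun i : Fin (n + 1) =>
      (X (Sum.inl i) * X (Sum.inr i) : MvPolynomial (Vars n) k)) (monomial τ c) := rfl
  rw [h, aeval_monomial, Finsupp.prod_fintype _ _ (by simp)]
  have h2 : (monomial (dExp n τ) c) = C c * monomial (dExp n τ) (1 : k) := by
    rw [C_mul_monomial, mul_one]
  rw [h2, prod_X_pow_eq, ← Finset.prod_mul_distrib]
  simp [dExp, mul_pow, algebraMap_eq]

lemma monomial_smul_basisElt (k : Type) [Field k] (n : ℕ) (τ : Fin (n + 1) →₀ ℕ) (c : k)
    (z : ℤ) : (monomial τ c : MvPolynomial (Fin (n + 1)) k) • basisElt k n z =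
      monomial (eExp n z + dExp n τ) c := by
  rw [Algebra.smul_def, algebraMap_monomial, basisElt_eq, monomial_mul, mul_one, add_comm]

lemma exp_inj (n : ℕ) {z w : ℤ} {τ ρ : Fin (n + 1) →₀ ℕ}
    (h : eExp n z + dExp n τ = eExp n w + dExp n ρ) : z = w ∧ τ = ρ := by
  have hl : ∀ i, z.toNat + τ i = w.toNat + ρ i := fun i => by
    simpa [eExp, dExp] using DFunLike.congr_fun h (Sum.inl i)
  have hr : ∀ i, (-z).toNat + τ i = (-w).toNat + ρ i := fun i => by
    simpa [eExp, dExp] using DFunLike.congr_fun h (Sum.inr i)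
  have hz : z = w := by
    have h1 := hl 0
    have h2 := hr 0
    omega
  refine ⟨hz, ?_⟩
  ext i
  have h1 := hl i
  subst hz
  omega

lemma coeff_smul_basisElt (k : Type) [Field k] (n : ℕ) (p : MvPolynomial (Fin (n + 1)) k)
    (z w : ℤ) (τ : Fin (n + 1) →₀ ℕ) :
    coeff (eExp n z + dExp n τ) (p • basisElt k n w) = if w = z then coeff τ p else 0 := by
  classical
  induction p using MvPolynomial.induction_on' with
  | monomial ρ c =>
    rw [monomial_smul_basisElt, coeff_monomial, coeff_monomial]
    by_cases h : eExp n w + dExp n ρ = eExp n z + dExp n τ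
    · obtain ⟨rfl, rfl⟩ := exp_inj n h
      simp
    · rw [if_neg h]
      split_ifs with h1 h2
      · subst h1 h2
        exact absurd rfl h
      · rfl
      · rfl
  | add p q hp hq =>
    rw [add_smul, coeff_add, hp, hq]
    split_ifs <;> simp

lemma exists_exp (n : ℕ) (σ : Vars n →₀ ℕ) (h : ∀ l, wt n σ l = 0) :
    ∃ z τ, σ = eExp n z + dExp n τ := by
  have hc : ∀ i : Fin (n + 1), (σ (Sum.inl i) : ℤ) - σ (Sum.inr i) =
      σ (Sum.inl 0) - σ (Sum.inr 0) := by
    intro i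
    induction i using Fin.induction with
    | zero => rfl
    | succ l ih =>
      have := h l
      unfold wt at this
      omega
  refine ⟨(σ (Sum.inl 0) : ℤ) - σ (Sum.inr 0), Finsupp.equivFunOnFinite.symm
    (fun i => min (σ (Sum.inl i)) (σ (Sum.inr i))), ?_⟩
  ext i
  rcases i with i | i
  · have := hc i
    simp [eExp, dExp]
    omega
  · have := hc i
    simp [eExp, dExp]
    omega

lemma wt_exp (n : ℕ) (z : ℤ) (τ : Fin (n + 1) →₀ ℕ) (l : Fin n) :
    wt n (eExp n z + dExp n τ) l = 0 := by
  simp [wt, eExp, dExp]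
  ring

lemma wtSpace_add (k : Type) [Field k] (n : ℕ) (χ : Fin n → ℤ) {p q : MvPolynomial (Vars n) k}
    (hp : p ∈ wtSpace k n χ) (hq : q ∈ wtSpace k n χ) : p + q ∈ wtSpace k n χ := by
  classical
  intro σ hσ
  rcases Finset.mem_union.1 (support_add hσ) with h | h
  · exact hp σ h
  · exact hq σ h

lemma smul_basisElt_mem (k : Type) [Field k] (n : ℕ) (p : MvPolynomial (Fin (n + 1)) k)
    (z : ℤ) : p • basisElt k n z ∈ wtSpace k n 0 := by
  classical
  induction p using MvPolynomial.induction_on' with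
  | monomial ρ c =>
    rw [monomial_smul_basisElt]
    intro σ hσ l
    have := Finset.mem_singleton.1 (support_monomial_subset hσ)
    rw [this, wt_exp]
    rfl
  | add p q hp hq =>
    rw [add_smul]
    exact wtSpace_add k n 0 hp hq

/-- The invariant subalgebra `A₀` is free as a module over `k[T₀,…,Tₙ]` (acting via
`Tᵢ ↦ xᵢyᵢ`) with basis `{1} ∪ {uʳ : r ≥ 1} ∪ {vˢ : s ≥ 1}`: the family is linearly
independent over `k[T₀,…,Tₙ]` and its `k[T₀,…,Tₙ]`-span is exactly `A₀`. -/
theorem stmt2 (k : Type) [Field k] (n : ℕ) (hn : 1 ≤ n) :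
    LinearIndependent (MvPolynomial (Fin (n + 1)) k) (basisElt k n) ∧
    (↑(Submodule.span (MvPolynomial (Fin (n + 1)) k) (Set.range (basisElt k n))) :
        Set (MvPolynomial (Vars n) k)) = wtSpace k n 0 := by
  constructor
  · rw [linearIndependent_iff]
    intro f hf
    ext z τ
    have h := congrArg (coeff (eExp n z + dExp n τ)) hf
    rw [Finsupp.linearCombination_apply, Finsupp.sum, coeff_sum] at h
    simp only [coeff_smul_basisElt, Finset.sum_ite_eq', coeff_zero] at h
    by_cases hz : z ∈ f.support
    · simpa [hz] using h
    · rw [Finsupp.notMem_support_iff.1 hz]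
      simp
  · apply Set.Subset.antisymm
    · intro x hx
      obtain ⟨f, rfl⟩ := (Finsupp.mem_span_range_iff_exists_finsupp).1 hx
      rw [Finsupp.sum]
      refine Finset.sum_induction _ (· ∈ wtSpace k n 0)
        (fun _ _ => wtSpace_add k n 0) ?_ (fun z _ => smul_basisElt_mem k n _ z)
      intro σ hσ
      simp at hσ
    · intro p hp
      rw [SetLike.mem_coe, p.as_sum]
      refine Submodule.sum_mem _ fun σ hσ => ?_
      obtain ⟨z, τ, h⟩ := exists_exp n σ (hp σ hσ)
      have : monomial σ (coeff σ p) =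
          (monomial τ (coeff σ p) : MvPolynomial (Fin (n + 1)) k) • basisElt k n z := by
        rw [monomial_smul_basisElt, ← h]
      rw [this]
      exact Submodule.smul_mem _ _ (Submodule.subset_span ⟨z, rfl⟩)
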